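/- Let U ⊆ ℝ^d be open, R > 0, and κ : ℝ^d → ℝ Borel measurable with 1_{{|y| ≤ R}} ≤ κ ≤ 1_{{|y| ≤ 2R}}. Let ℓ : U → ℝ^d and Q : U → (real d×d matrices) be bounded on every compact subset of U, and let N be a kernel assigning to each x ∈ U a Borel measure N(x,·) on ℝ^d with N(x,{0}) = 0, N(x,{y : x + y ∉ U}) = 0, and such that for every ε > 0 the function x ↦ ∫ b_ε(y) N(x,dy) is finite and bounded on every compact subset of U. For u : U → ℝ twice continuously differentiable with u and all partial derivatives of order ≤ 2 bounded on U, define I_q u(x) = ⟨ℓ(x), ∇u(x)⟩ + ½ Σ_{j,k=1}^d Q^{jk}(x) ∂_j∂_k u(x) + ∫_{{y : x+y ∈ U}} ( u(x+y) − u(x) − ⟨y, ∇u(x)⟩·κ(y) ) N(x,dy). Then for every compact K ⊆ U and every ε ∈ (0, min(R,1)] with K + εB ⊆ U there exists a constant d_K ≥ 0 such that for all such u, sup_{x ∈ K} |I_q u(x)| ≤ d_K · ( sup_{z ∈ U}|u(z)| + Σ_{1 ≤ |α| ≤ 2} sup_{z ∈ K+εB}|∂^α u(z)| ); in particular sup_{x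 ∈ K} |I_q u(x)| ≤ d_K · Σ_{|α| ≤ 2} ‖∂^α u‖_∞. -/

import Mathlib

/-! The bound is obtained term by term at a fixed `x ∈ K`. Write `S` for the sum of suprema on the
right hand side. The drift and diffusion terms are controlled by the local bounds of `ℓ` and `Q`
together with an expansion in the standard basis (`abs_apply_le_sum`). For the integral, the
integrand is at most `(2 + 2R + d²) · S · bfun ε y`: where `‖y‖ ≤ ε` one has `κ y = 1` and this is
Taylor's formula on the ball `closedBall x ‖y‖ ⊆ K + closedBall 0 ε` (`taylor_bound`), where
`‖y‖ > ε` it follows from the boundedness of `u` and from `0 ≤ κ ≤ 1`, `κ y = 0` for `‖y‖ > 2R`.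
Integrating against `N x` and using the local bound of `x ↦ ∫ bfun ε dN x` finishes the proof. The
sum of suprema only runs over `j ≤ k`; the other second derivatives are recovered from the symmetry
of the Hessian (`pd2_symm`). -/


open MeasureTheory Pointwise

noncomputable section

/-- `bfun ε y = |y|²` if `|y| ≤ ε` and `= 1` otherwise. -/
def bfun {d : ℕ} (ε : ℝ) (y : EuclideanSpace ℝ (Fin d)) : ℝ :=
  if ‖y‖ ≤ ε then ‖y‖ ^ 2 else 1

/-- First order partial derivative `∂ⱼ u`. -/
def pd {d : ℕ} (j : Fin d) (u : EuclideanSpace ℝ (Fin d) → ℝ)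
    (x : EuclideanSpace ℝ (Fin d)) : ℝ :=
  fderiv ℝ u x (EuclideanSpace.single j 1)

/-- Second order partial derivative `∂ⱼ∂ₖ u`. -/
def pd2 {d : ℕ} (j k : Fin d) (u : EuclideanSpace ℝ (Fin d) → ℝ)
    (x : EuclideanSpace ℝ (Fin d)) : ℝ :=
  fderiv ℝ (fun z => fderiv ℝ u z (EuclideanSpace.single k 1)) x (EuclideanSpace.single j 1)

/-- The integro-differential operator associated with the triplet `(ℓ, Q, N(·,dy))`:
`I_q u(x) = ⟨ℓ(x), ∇u(x)⟩ + ½ Σ Q^{jk}(x) ∂ⱼ∂ₖu(x)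
  + ∫_{x+y∈U} (u(x+y) − u(x) − ⟨y,∇u(x)⟩κ(y)) N(x,dy)`. -/
def Iq {d : ℕ} (κ : EuclideanSpace ℝ (Fin d) → ℝ)
    (ℓ : EuclideanSpace ℝ (Fin d) → EuclideanSpace ℝ (Fin d))
    (Q : EuclideanSpace ℝ (Fin d) → Matrix (Fin d) (Fin d) ℝ)
    (N : EuclideanSpace ℝ (Fin d) → Measure (EuclideanSpace ℝ (Fin d)))
    (U : Set (EuclideanSpace ℝ (Fin d)))
    (u : EuclideanSpace ℝ (Fin d) → ℝ) (x : EuclideanSpace ℝ (Fin d)) : ℝ :=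
  fderiv ℝ u x (ℓ x) + (1 / 2) * ∑ j : Fin d, ∑ k : Fin d, Q x j k * pd2 j k u x
    + ∫ y in {y | x + y ∈ U}, (u (x + y) - u x - fderiv ℝ u x y * κ y) ∂(N x)

/-- A linear form is controlled by its values on the standard basis. -/
lemma abs_apply_le_sum {d : ℕ} (L : EuclideanSpace ℝ (Fin d) →L[ℝ] ℝ)
    (v : EuclideanSpace ℝ (Fin d)) :
    |L v| ≤ ‖v‖ * ∑ j : Fin d, |L (EuclideanSpace.single j 1)| := by
  have hv : L v = ∑ j : Fin d, v j * L (EuclideanSpace.single j 1) := by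
    conv_lhs => rw [← (EuclideanSpace.basisFun (Fin d) ℝ).sum_repr v]
    simp [map_sum]
  rw [hv, Finset.mul_sum]
  refine (Finset.abs_sum_le_sum_abs _ _).trans (Finset.sum_le_sum fun j _ => ?_)
  rw [abs_mul]
  gcongr
  exact PiLp.norm_apply_le v j

/-- The operator norm of a bilinear form whose matrix entries are bounded by `B`. -/
lemma norm_bilin_le {d : ℕ}
    (L : EuclideanSpace ℝ (Fin d) →L[ℝ] EuclideanSpace ℝ (Fin d) →L[ℝ] ℝ) (B : ℝ) (hB : 0 ≤ B)
    (h : ∀ j k : Fin d, |L (EuclideanSpace.single j 1) (EuclideanSpace.single k 1)| ≤ B) :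
    ‖L‖ ≤ (d : ℝ) ^ 2 * B := by
  refine L.opNorm_le_bound (by positivity) fun v => ?_
  refine (L v).opNorm_le_bound (by positivity) fun w => ?_
  have h1 : ∀ k : Fin d, |L v (EuclideanSpace.single k 1)| ≤ ‖v‖ * (d * B) := fun k => by
    have := abs_apply_le_sum (L.flip (EuclideanSpace.single k 1)) v
    simp only [ContinuousLinearMap.flip_apply] at this
    refine this.trans ?_
    gcongr
    simpa using Finset.sum_le_card_nsmul Finset.univ _ B fun j _ => h j k
  have h2 := Finset.sum_le_card_nsmul Finset.univ _ _ fun k _ => h1 k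
  simp only [Finset.card_univ, Fintype.card_fin, nsmul_eq_mul] at h2
  calc ‖L v w‖ ≤ ‖w‖ * ∑ k : Fin d, |L v (EuclideanSpace.single k 1)| := abs_apply_le_sum _ _
    _ ≤ ‖w‖ * (d * (‖v‖ * (d * B))) := by gcongr
    _ = (d : ℝ) ^ 2 * B * ‖v‖ * ‖w‖ := by ring

lemma pd2_eq {d : ℕ} {u : EuclideanSpace ℝ (Fin d) → ℝ} {z : EuclideanSpace ℝ (Fin d)}
    (h : DifferentiableAt ℝ (fderiv ℝ u) z) (j k : Fin d) :
    pd2 j k u z =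
      fderiv ℝ (fderiv ℝ u) z (EuclideanSpace.single j 1) (EuclideanSpace.single k 1) := by
  unfold pd2
  have := (h.hasFDerivAt.clm_apply
    (hasFDerivAt_const (EuclideanSpace.single k (1 : ℝ) : EuclideanSpace ℝ (Fin d)) z)).fderiv
  rw [this]
  simp

lemma ContDiffAt.differentiableAt_fderiv_two {d : ℕ} {u : EuclideanSpace ℝ (Fin d) → ℝ}
    {z : EuclideanSpace ℝ (Fin d)} (h : ContDiffAt ℝ 2 u z) :
    DifferentiableAt ℝ (fderiv ℝ u) z :=
  (h.fderiv_right (m := 1) (by norm_num)).differentiableAt (by norm_num)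

lemma pd2_symm {d : ℕ} {u : EuclideanSpace ℝ (Fin d) → ℝ} {z : EuclideanSpace ℝ (Fin d)}
    (h : ContDiffAt ℝ 2 u z) (j k : Fin d) : pd2 j k u z = pd2 k j u z := by
  rw [pd2_eq h.differentiableAt_fderiv_two, pd2_eq h.differentiableAt_fderiv_two]
  exact (h.isSymmSndFDerivAt (by simp)).eq _ _

/-- Second order Taylor estimate, from two applications of the mean value inequality. -/
lemma taylor_bound {d : ℕ} {u : EuclideanSpace ℝ (Fin d) → ℝ} {x y : EuclideanSpace ℝ (Fin d)}
    {M : ℝ} (hu : ∀ z ∈ Metric.closedBall x ‖y‖, ContDiffAt ℝ 2 u z)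
    (hM : ∀ z ∈ Metric.closedBall x ‖y‖, ‖fderiv ℝ (fderiv ℝ u) z‖ ≤ M) :
    |u (x + y) - u x - fderiv ℝ u x y| ≤ M * ‖y‖ ^ 2 := by
  have hx : x ∈ Metric.closedBall x ‖y‖ := by simp
  have hxy : x + y ∈ Metric.closedBall x ‖y‖ := by simp
  have hM0 : 0 ≤ M := (norm_nonneg (fderiv ℝ (fderiv ℝ u) x)).trans (hM x hx)
  have h1 : ∀ z ∈ Metric.closedBall x ‖y‖, ‖fderiv ℝ u z - fderiv ℝ u x‖ ≤ M * ‖y‖ :=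
    fun z hz => by
      refine ((convex_closedBall x ‖y‖).norm_image_sub_le_of_norm_fderiv_le
        (fun w hw => (hu w hw).differentiableAt_fderiv_two) hM hx hz).trans ?_
      gcongr
      simpa [dist_eq_norm] using hz
  have h2 := (convex_closedBall x ‖y‖).norm_image_sub_le_of_norm_fderiv_le'
    (fun w hw => (hu w hw).differentiableAt (by norm_num)) h1 hx hxy
  simp only [add_sub_cancel_left, Real.norm_eq_abs] at h2
  exact h2.trans_eq (by ring)

theorem stmt8 {d : ℕ} (U : Set (EuclideanSpace ℝ (Fin d))) (hU : IsOpen U)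
    (R : ℝ) (hR : 0 < R) (κ : EuclideanSpace ℝ (Fin d) → ℝ) (hκm : Measurable κ)
    (hκ : ∀ y : EuclideanSpace ℝ (Fin d),
      (if ‖y‖ ≤ R then (1 : ℝ) else 0) ≤ κ y ∧ κ y ≤ (if ‖y‖ ≤ 2 * R then (1 : ℝ) else 0))
    (ℓ : EuclideanSpace ℝ (Fin d) → EuclideanSpace ℝ (Fin d))
    (Q : EuclideanSpace ℝ (Fin d) → Matrix (Fin d) (Fin d) ℝ)
    (N : EuclideanSpace ℝ (Fin d) → Measure (EuclideanSpace ℝ (Fin d)))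
    (hℓb : ∀ K : Set (EuclideanSpace ℝ (Fin d)), K ⊆ U → IsCompact K →
      ∃ C : ℝ, ∀ x ∈ K, ‖ℓ x‖ ≤ C)
    (hQb : ∀ K : Set (EuclideanSpace ℝ (Fin d)), K ⊆ U → IsCompact K →
      ∃ C : ℝ, ∀ x ∈ K, ∀ j k : Fin d, |Q x j k| ≤ C)
    (hN0 : ∀ x ∈ U, N x {0} = 0)
    (hNU : ∀ x ∈ U, N x {y | x + y ∉ U} = 0)
    (hNint : ∀ ε : ℝ, 0 < ε → ∀ x ∈ U, Integrable (bfun ε) (N x))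
    (hNb : ∀ ε : ℝ, 0 < ε → ∀ K : Set (EuclideanSpace ℝ (Fin d)), K ⊆ U → IsCompact K →
      ∃ C : ℝ, ∀ x ∈ K, (∫ y, bfun ε y ∂(N x)) ≤ C) :
    ∀ K : Set (EuclideanSpace ℝ (Fin d)), K ⊆ U → IsCompact K →
      ∀ ε : ℝ, 0 < ε → ε ≤ min R 1 →
        K + Metric.closedBall (0 : EuclideanSpace ℝ (Fin d)) ε ⊆ U →
      ∃ dK : ℝ, 0 ≤ dK ∧ ∀ u : EuclideanSpace ℝ (Fin d) → ℝ, ContDiffOn ℝ 2 u U →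
        (∃ C : ℝ, ∀ z ∈ U, |u z| ≤ C) →
        (∀ j : Fin d, ∃ C : ℝ, ∀ z ∈ U, |pd j u z| ≤ C) →
        (∀ j k : Fin d, ∃ C : ℝ, ∀ z ∈ U, |pd2 j k u z| ≤ C) →
        (∀ x ∈ K, |Iq κ ℓ Q N U u x| ≤ dK *
          (sSup ((fun z => |u z|) '' U)
            + ∑ j : Fin d, sSup ((fun z => |pd j u z|) ''
                (K + Metric.closedBall (0 : EuclideanSpace ℝ (Fin d)) ε))
            + ∑ p ∈ Finset.univ.filter (fun p : Fin d × Fin d => p.1 ≤ p.2),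
                sSup ((fun z => |pd2 p.1 p.2 u z|) ''
                  (K + Metric.closedBall (0 : EuclideanSpace ℝ (Fin d)) ε)))) ∧
        (∀ x ∈ K, |Iq κ ℓ Q N U u x| ≤ dK *
          (sSup ((fun z => |u z|) '' U)
            + ∑ j : Fin d, sSup ((fun z => |pd j u z|) '' U)
            + ∑ p ∈ Finset.univ.filter (fun p : Fin d × Fin d => p.1 ≤ p.2),
                sSup ((fun z => |pd2 p.1 p.2 u z|) '' U))) := by
  intro K hKU hK ε hε hεR hKε
  obtain ⟨Cℓ, hCℓ⟩ := hℓb K hKU hK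
  obtain ⟨CQ, hCQ⟩ := hQb K hKU hK
  obtain ⟨CN, hCN⟩ := hNb ε hε K hKU hK
  have hb0 : ∀ y : EuclideanSpace ℝ (Fin d), 0 ≤ bfun ε y := fun y => by
    unfold bfun; split_ifs <;> positivity
  refine ⟨|Cℓ| + (1 / 2) * ((d : ℝ) ^ 2 * |CQ|) + (2 + 2 * R + (d : ℝ) ^ 2) * |CN|,
    by positivity, fun u hu hu0 hu1 hu2 => ?_⟩
  set V := K + Metric.closedBall (0 : EuclideanSpace ℝ (Fin d)) ε with hV
  have hbdd : ∀ (f : EuclideanSpace ℝ (Fin d) → ℝ), (∃ C : ℝ, ∀ z ∈ U, |f z| ≤ C) →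
      BddAbove ((fun z => |f z|) '' U) := by
    rintro f ⟨C, hC⟩
    exact ⟨C, by rintro _ ⟨z, hz, rfl⟩; exact hC z hz⟩
  have hbddV : ∀ (f : EuclideanSpace ℝ (Fin d) → ℝ), (∃ C : ℝ, ∀ z ∈ U, |f z| ≤ C) →
      BddAbove ((fun z => |f z|) '' V) := fun f hf => (hbdd f hf).mono (Set.image_mono hKε)
  have hsup0 : ∀ (f : EuclideanSpace ℝ (Fin d) → ℝ) (W : Set (EuclideanSpace ℝ (Fin d))),
      0 ≤ sSup ((fun z => |f z|) '' W) := fun f W =>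
    Real.sSup_nonneg (by rintro _ ⟨z, _, rfl⟩; exact abs_nonneg _)
  rw [and_iff_left_of_imp]
  · set A := sSup ((fun z => |u z|) '' U) with hA
    set B1 := ∑ j : Fin d, sSup ((fun z => |pd j u z|) '' V) with hB1
    set B2 := ∑ p ∈ Finset.univ.filter (fun p : Fin d × Fin d => p.1 ≤ p.2),
      sSup ((fun z => |pd2 p.1 p.2 u z|) '' V) with hB2
    have hA0 : 0 ≤ A := hsup0 u U
    have hB10 : 0 ≤ B1 := Finset.sum_nonneg fun j _ => hsup0 _ _
    have hB20 : 0 ≤ B2 := Finset.sum_nonneg fun j _ => hsup0 _ _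
    have hC2 : ∀ z ∈ U, ContDiffAt ℝ 2 u z := fun z hz => hu.contDiffAt (hU.mem_nhds hz)
    have hAu : ∀ z ∈ U, |u z| ≤ A := fun z hz =>
      le_csSup (hbdd u hu0) (Set.mem_image_of_mem _ hz)
    have hB1u : ∀ z ∈ V, ∀ v, |fderiv ℝ u z v| ≤ ‖v‖ * B1 := fun z hz v => by
      refine (abs_apply_le_sum _ v).trans ?_
      gcongr
      exact Finset.sum_le_sum fun j _ =>
        le_csSup (hbddV _ (hu1 j)) (Set.mem_image_of_mem (fun z => |pd j u z|) hz)
    have hB2le : ∀ z ∈ V, ∀ j k : Fin d, j ≤ k → |pd2 j k u z| ≤ B2 := fun z hz j k hjk =>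
      (le_csSup (hbddV _ (hu2 j k)) (Set.mem_image_of_mem (fun z => |pd2 j k u z|) hz)).trans
        (Finset.single_le_sum
          (f := fun p : Fin d × Fin d => sSup ((fun z => |pd2 p.1 p.2 u z|) '' V))
          (fun p _ => hsup0 _ _) (a := (j, k)) (by simpa using hjk))
    have hB2u : ∀ z ∈ V, ∀ j k : Fin d, |pd2 j k u z| ≤ B2 := fun z hz j k => by
      rcases le_total j k with h | h
      · exact hB2le z hz j k h
      · rw [pd2_symm (hC2 z (hKε hz))]
        exact hB2le z hz k j h
    have hHess : ∀ z ∈ V, ‖fderiv ℝ (fderiv ℝ u) z‖ ≤ (d : ℝ) ^ 2 * B2 := fun z hz =>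
      norm_bilin_le _ _ hB20 fun j k => by
        rw [← pd2_eq (hC2 z (hKε hz)).differentiableAt_fderiv_two]
        exact hB2u z hz j k
    intro x hx
    have hballV : Metric.closedBall x ε ⊆ V := fun z hz =>
      ⟨x, hx, z - x, by simpa [dist_eq_norm] using hz, by simp⟩
    have hxV : x ∈ V := hballV (by simp [hε.le])
    have hT1 : |fderiv ℝ u x (ℓ x)| ≤ |Cℓ| * (A + B1 + B2) :=
      calc |fderiv ℝ u x (ℓ x)| ≤ ‖ℓ x‖ * B1 := hB1u x hxV _
        _ ≤ |Cℓ| * (A + B1 + B2) := by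
          gcongr
          · exact (hCℓ x hx).trans (le_abs_self _)
          · linarith
    have hT2 : |(1 / 2) * ∑ j : Fin d, ∑ k : Fin d, Q x j k * pd2 j k u x|
        ≤ (1 / 2) * ((d : ℝ) ^ 2 * |CQ|) * (A + B1 + B2) := by
      have hterm : ∀ j k : Fin d, |Q x j k * pd2 j k u x| ≤ |CQ| * (A + B1 + B2) := fun j k => by
        rw [abs_mul]
        exact mul_le_mul ((hCQ x hx j k).trans (le_abs_self _))
          (by linarith [hB2u x hxV j k]) (abs_nonneg _) (abs_nonneg _)
      rw [abs_mul, abs_of_pos (by norm_num : (0 : ℝ) < 1 / 2), mul_assoc]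
      gcongr
      calc |∑ j : Fin d, ∑ k : Fin d, Q x j k * pd2 j k u x|
          ≤ ∑ j : Fin d, ∑ k : Fin d, |Q x j k * pd2 j k u x| :=
            (Finset.abs_sum_le_sum_abs _ _).trans
              (Finset.sum_le_sum fun j _ => Finset.abs_sum_le_sum_abs _ _)
        _ ≤ ∑ j : Fin d, ∑ k : Fin d, |CQ| * (A + B1 + B2) :=
            Finset.sum_le_sum fun j _ => Finset.sum_le_sum fun k _ => hterm j k
        _ = (d : ℝ) ^ 2 * |CQ| * (A + B1 + B2) := by simp; ring
    have hintegrand : ∀ y ∈ {y | x + y ∈ U}, ‖u (x + y) - u x - fderiv ℝ u x y * κ y‖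
        ≤ (2 + 2 * R + (d : ℝ) ^ 2) * (A + B1 + B2) * bfun ε y := fun y hy => by
      obtain ⟨hκl, hκu⟩ := hκ y
      rw [Real.norm_eq_abs]
      by_cases hyε : ‖y‖ ≤ ε
      · have hyR : ‖y‖ ≤ R := hyε.trans (hεR.trans (min_le_left _ _))
        have hκ1 : κ y = 1 := by
          rw [if_pos hyR] at hκl
          rw [if_pos (by linarith)] at hκu
          exact le_antisymm hκu hκl
        have hsub : Metric.closedBall x ‖y‖ ⊆ V :=
          (Metric.closedBall_subset_closedBall hyε).trans hballV
        have := taylor_bound (y := y) (fun z hz => hC2 z (hKε (hsub hz)))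
          (fun z hz => hHess z (hsub hz))
        rw [hκ1, mul_one, bfun, if_pos hyε]
        refine this.trans ?_
        gcongr
        · linarith
        · linarith
      · have hκ0 : 0 ≤ κ y := le_trans (by split_ifs <;> norm_num) hκl
        have hgrad : |fderiv ℝ u x y * κ y| ≤ 2 * R * B1 := by
          rw [abs_mul, abs_of_nonneg hκ0]
          by_cases hy2 : ‖y‖ ≤ 2 * R
          · rw [if_pos hy2] at hκu
            calc |fderiv ℝ u x y| * κ y ≤ (‖y‖ * B1) * 1 := by
                  gcongr
                  exact hB1u x hxV y
              _ ≤ 2 * R * B1 := by rw [mul_one]; gcongr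
          · rw [if_neg hy2] at hκu
            rw [le_antisymm hκu hκ0, mul_zero]
            positivity
        rw [bfun, if_neg hyε, mul_one]
        have h1 := hAu _ hy
        have h2 := hAu x (hKU hx)
        have h3 : |u (x + y) - u x - fderiv ℝ u x y * κ y| ≤ 2 * A + 2 * R * B1 := by
          rw [abs_le] at *
          constructor <;> linarith
        refine h3.trans ?_
        have : 0 ≤ 2 * (B1 + B2) + 2 * R * (A + B2) + (d : ℝ) ^ 2 * (A + B1 + B2) := by positivity
        linarith
    have hT3 : |∫ y in {y | x + y ∈ U}, (u (x + y) - u x - fderiv ℝ u x y * κ y) ∂(N x)|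
        ≤ (2 + 2 * R + (d : ℝ) ^ 2) * |CN| * (A + B1 + B2) := by
      have hmeas : MeasurableSet {y | x + y ∈ U} :=
        (hU.preimage (continuous_const.add continuous_id)).measurableSet
      have hbint : Integrable
          (fun y => (2 + 2 * R + (d : ℝ) ^ 2) * (A + B1 + B2) * bfun ε y) (N x) :=
        (hNint ε hε x (hKU hx)).const_mul _
      calc |∫ y in {y | x + y ∈ U}, (u (x + y) - u x - fderiv ℝ u x y * κ y) ∂(N x)|
          ≤ ∫ y in {y | x + y ∈ U},
              (2 + 2 * R + (d : ℝ) ^ 2) * (A + B1 + B2) * bfun ε y ∂(N x) :=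
            norm_integral_le_of_norm_le hbint.restrict
              ((ae_restrict_iff' hmeas).2 (Filter.Eventually.of_forall hintegrand))
        _ ≤ ∫ y, (2 + 2 * R + (d : ℝ) ^ 2) * (A + B1 + B2) * bfun ε y ∂(N x) :=
            setIntegral_le_integral hbint (Filter.Eventually.of_forall fun y =>
              mul_nonneg (by positivity) (hb0 y))
        _ = (2 + 2 * R + (d : ℝ) ^ 2) * (A + B1 + B2) * ∫ y, bfun ε y ∂(N x) :=
            integral_const_mul _ _
        _ ≤ (2 + 2 * R + (d : ℝ) ^ 2) * (A + B1 + B2) * |CN| := by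
            gcongr
            exact (hCN x hx).trans (le_abs_self _)
        _ = (2 + 2 * R + (d : ℝ) ^ 2) * |CN| * (A + B1 + B2) := by ring
    unfold Iq
    calc _ ≤ _ := abs_add_three _ _ _
      _ ≤ _ := add_le_add (add_le_add hT1 hT2) hT3
      _ = _ := by ring
  -- The suprema over `U` dominate those over `V ⊆ U`, so the second bound follows from the first.
  · intro h x hx
    have hVne : V.Nonempty := ⟨x, x, hx, 0, by simp [hε.le], by simp⟩
    have hmono : ∀ (f : EuclideanSpace ℝ (Fin d) → ℝ), (∃ C : ℝ, ∀ z ∈ U, |f z| ≤ C) →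
        sSup ((fun z => |f z|) '' V) ≤ sSup ((fun z => |f z|) '' U) := fun f hf =>
      csSup_le_csSup (hbdd f hf) (hVne.image _) (Set.image_mono hKε)
    refine (h x hx).trans ?_
    refine mul_le_mul_of_nonneg_left (add_le_add (add_le_add le_rfl ?_) ?_) (by positivity)
    · exact Finset.sum_le_sum fun j _ => hmono _ (hu1 j)
    · exact Finset.sum_le_sum fun p _ => hmono _ (hu2 p.1 p.2)

end
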